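/- For every c ∈ ℂ, the entire function f(w) := ₀𝐅₁(c; w) satisfies the ₀F₁ equation: w·f''(w) + c·f'(w) − f(w) = 0 for all w ∈ ℂ. -/

import Mathlib

open Complex

/-- Olver-normalized hypergeometric function `₀𝐅₁(c; w) = ∑ wⁿ/(n! Γ(c+n))`. -/
noncomputable def zeroF1reg (c w : ℂ) : ℂ :=
  ∑' n : ℕ, w ^ n / ((n.factorial : ℂ) * Complex.Gamma (c + n))

/-!
`₀𝐅₁(c; ·)` is the exponential generating function of `n ↦ 1 / Γ(c + n)`. Differentiating an
exponential generating function shifts its coefficients, so `₀𝐅₁(c; ·)' = ₀𝐅₁(c + 1; ·)`, while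
the Euler operator `z d/dz` multiplies the `n`-th coefficient by `n`. Applying `z d/dz + c` to
`₀𝐅₁(c + 1; ·)` therefore gives the coefficients `(c + n) / Γ(c + n + 1) = 1 / Γ(c + n)`, that is,
`₀𝐅₁(c; ·)` again. The same recurrence makes `‖1 / Γ(c + n)‖` decrease once `‖c + n‖ ≥ 1`, so the
coefficients are bounded and the series converges everywhere.
-/

open Filter Asymptotics
open scoped Nat

lemma succ_mul_pow_div_factorial_succ {K : Type*} [Field K] [CharZero K] (z : K) (n : ℕ) :
    ((n + 1 : ℕ) : K) * z ^ n / ((n + 1)! : K) = z ^ n / (n ! : K) := by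
  rw [Nat.factorial_succ, Nat.cast_mul, mul_div_mul_left _ _ (Nat.cast_ne_zero.2 n.succ_ne_zero)]

section ExpGenFun

variable {E : Type*} [NormedAddCommGroup E] [NormedSpace ℂ E]

/-- The exponential generating function `∑ zⁿ/n! • aₙ` of a sequence of vectors, as a function of
a complex variable. The value is `0` at points where the series is not summable. -/
noncomputable def expGenFun (a : ℕ → E) (z : ℂ) : E :=
  ∑' n : ℕ, (z ^ n / (n ! : ℂ)) • a n

lemma norm_pow_div_factorial_smul_le (a : ℕ → E) {r : ℝ} {z : ℂ} (hz : ‖z‖ ≤ r) (n : ℕ) :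
    ‖(z ^ n / (n ! : ℂ)) • a n‖ ≤ r ^ n / (n ! : ℝ) * ‖a n‖ := by
  rw [norm_smul, norm_div, norm_pow, norm_natCast]
  gcongr

variable [CompleteSpace E] {a : ℕ → E} {r : ℝ} {z : ℂ}

lemma hasSum_expGenFun (ha : Summable fun n : ℕ ↦ r ^ n / (n ! : ℝ) * ‖a n‖) (hz : ‖z‖ ≤ r) :
    HasSum (fun n : ℕ ↦ (z ^ n / (n ! : ℂ)) • a n) (expGenFun a z) :=
  (Summable.of_norm_bounded ha (norm_pow_div_factorial_smul_le a hz)).hasSum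

lemma differentiableOn_expGenFun (ha : Summable fun n : ℕ ↦ r ^ n / (n ! : ℝ) * ‖a n‖) :
    DifferentiableOn ℂ (expGenFun a) (Metric.ball 0 r) :=
  differentiableOn_tsum_of_summable_norm ha (fun n ↦ by fun_prop) Metric.isOpen_ball
    fun n _ hz ↦ norm_pow_div_factorial_smul_le a (mem_ball_zero_iff.1 hz).le n

lemma hasSum_deriv_expGenFun (ha : Summable fun n : ℕ ↦ r ^ n / (n ! : ℝ) * ‖a n‖)
    (hz : ‖z‖ < r) :
    HasSum (fun n : ℕ ↦ (z ^ n / (n ! : ℂ)) • a (n + 1)) (deriv (expGenFun a) z) := by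
  have deriv_term (n : ℕ) : deriv (fun w : ℂ ↦ (w ^ n / (n ! : ℂ)) • a n) z =
      (n * z ^ (n - 1) / (n ! : ℂ)) • a n :=
    (((hasDerivAt_pow n z).div_const _).smul_const _).deriv
  have termwise : HasSum (fun n : ℕ ↦ (n * z ^ (n - 1) / (n ! : ℂ)) • a n)
      (deriv (expGenFun a) z) := by
    simpa only [deriv_term] using! hasSum_deriv_of_summable_norm ha (fun n ↦ by fun_prop)
      Metric.isOpen_ball
      (fun n _ hw ↦ norm_pow_div_factorial_smul_le a (mem_ball_zero_iff.1 hw).le n)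
      (mem_ball_zero_iff.2 hz)
  simpa [succ_mul_pow_div_factorial_succ, -Nat.cast_add] using! (hasSum_nat_add_iff' 1).2 termwise

lemma deriv_expGenFun (ha : Summable fun n : ℕ ↦ r ^ n / (n ! : ℝ) * ‖a n‖) (hz : ‖z‖ < r) :
    deriv (expGenFun a) z = expGenFun (fun n ↦ a (n + 1)) z :=
  (hasSum_deriv_expGenFun ha hz).tsum_eq.symm

lemma hasSum_smul_deriv_expGenFun (ha : Summable fun n : ℕ ↦ r ^ n / (n ! : ℝ) * ‖a n‖)
    (hz : ‖z‖ < r) :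
    HasSum (fun n : ℕ ↦ (z ^ n / (n ! : ℂ)) • (n : ℂ) • a n) (z • deriv (expGenFun a) z) := by
  have succ_term (n : ℕ) : z • (z ^ n / (n ! : ℂ)) • a (n + 1) =
      (z ^ (n + 1) / ((n + 1)! : ℂ)) • ((n + 1 : ℕ) : ℂ) • a (n + 1) := by
    rw [smul_smul, smul_smul, ← succ_mul_pow_div_factorial_succ]
    ring_nf
  rw [← hasSum_nat_add_iff' 1]
  simpa only [succ_term, Finset.sum_range_one, Nat.cast_zero, zero_smul, smul_zero, sub_zero]
    using (hasSum_deriv_expGenFun ha hz).const_smul z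

lemma smul_deriv_add_smul_expGenFun (ha : Summable fun n : ℕ ↦ r ^ n / (n ! : ℝ) * ‖a n‖)
    (hz : ‖z‖ < r) (c : ℂ) :
    z • deriv (expGenFun a) z + c • expGenFun a z = expGenFun (fun n ↦ (c + n) • a n) z := by
  have sum_add := (hasSum_smul_deriv_expGenFun ha hz).add ((hasSum_expGenFun ha hz.le).const_smul c)
  rw [← sum_add.tsum_eq, expGenFun]
  refine tsum_congr fun n ↦ ?_
  module

end ExpGenFun

lemma isBigO_one_of_eventually_norm_succ_le {E : Type*} [SeminormedAddCommGroup E] {a : ℕ → E}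
    (ha : ∀ᶠ n in atTop, ‖a (n + 1)‖ ≤ ‖a n‖) : a =O[atTop] (1 : ℕ → ℝ) := by
  obtain ⟨N, hN⟩ := eventually_atTop.1 ha
  have anti : AntitoneOn (fun n ↦ ‖a n‖) (Set.Ici N) := antitoneOn_nat_Ici_of_succ_le hN
  refine .of_bound ‖a N‖ ((eventually_ge_atTop N).mono fun n hn ↦ ?_)
  simpa using anti Set.self_mem_Ici hn hn

lemma inv_Gamma_add_natCast (c : ℂ) (n : ℕ) :
    (Gamma (c + n))⁻¹ = (c + n) * (Gamma (c + 1 + n))⁻¹ := by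
  rw [one_div_Gamma_eq_self_mul_one_div_Gamma_add_one, add_right_comm]

lemma isBigO_inv_Gamma_add_natCast (c : ℂ) :
    (fun n : ℕ ↦ (Gamma (c + n))⁻¹) =O[atTop] (1 : ℕ → ℝ) := by
  apply isBigO_one_of_eventually_norm_succ_le
  have one_le_norm : ∀ᶠ n : ℕ in atTop, 1 ≤ ‖c + n‖ :=
    (tendsto_norm_cobounded_atTop.comp <| (tendsto_const_add_cobounded c).comp
      tendsto_natCast_atTop_cobounded).eventually_ge_atTop 1
  filter_upwards [one_le_norm] with n hn
  rw [inv_Gamma_add_natCast c n, norm_mul, add_right_comm c 1, Nat.cast_succ, ← add_assoc]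
  exact le_mul_of_one_le_left (norm_nonneg _) hn

lemma summable_pow_div_factorial_mul_norm_inv_Gamma (c : ℂ) (r : ℝ) :
    Summable fun n : ℕ ↦ r ^ n / (n ! : ℝ) * ‖(Gamma (c + n))⁻¹‖ := by
  refine summable_of_isBigO_nat (Real.summable_pow_div_factorial r) ?_
  simpa using (isBigO_refl (fun n : ℕ ↦ r ^ n / (n ! : ℝ)) atTop).mul
    (isBigO_inv_Gamma_add_natCast c).norm_left

lemma zeroF1reg_eq_expGenFun (c : ℂ) :
    zeroF1reg c = expGenFun fun n ↦ (Gamma (c + n))⁻¹ := by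
  ext w
  simp only [zeroF1reg, expGenFun, smul_eq_mul, ← div_eq_mul_inv, div_div]

lemma differentiable_zeroF1reg (c : ℂ) : Differentiable ℂ (zeroF1reg c) := by
  intro w
  rw [zeroF1reg_eq_expGenFun]
  exact (differentiableOn_expGenFun
    (summable_pow_div_factorial_mul_norm_inv_Gamma c (‖w‖ + 1))).differentiableAt
    (Metric.isOpen_ball.mem_nhds (by simp))

lemma deriv_zeroF1reg (c : ℂ) : deriv (zeroF1reg c) = zeroF1reg (c + 1) := by
  ext w
  rw [zeroF1reg_eq_expGenFun c, zeroF1reg_eq_expGenFun (c + 1),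
    deriv_expGenFun (summable_pow_div_factorial_mul_norm_inv_Gamma c _) (lt_add_one ‖w‖)]
  simp only [Nat.cast_succ, add_assoc, add_comm (1 : ℂ)]

lemma mul_deriv_add_mul_zeroF1reg_add_one (c w : ℂ) :
    w * deriv (zeroF1reg (c + 1)) w + c * zeroF1reg (c + 1) w = zeroF1reg c w := by
  rw [zeroF1reg_eq_expGenFun c, zeroF1reg_eq_expGenFun (c + 1)]
  simpa only [smul_eq_mul, ← inv_Gamma_add_natCast] using smul_deriv_add_smul_expGenFun
    (summable_pow_div_factorial_mul_norm_inv_Gamma (c + 1) _) (lt_add_one ‖w‖) c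

/-- for every `c ∈ ℂ`, the entire function `f(w) = ₀𝐅₁(c; w)` satisfies the
`₀F₁` equation `w f''(w) + c f'(w) - f(w) = 0` for all `w ∈ ℂ`. -/
theorem zeroF1reg_satisfies_zeroF1_equation (c : ℂ) :
    Differentiable ℂ (fun w : ℂ => zeroF1reg c w) ∧
    ∀ w : ℂ,
      w * deriv (deriv (fun w : ℂ => zeroF1reg c w)) w +
        c * deriv (fun w : ℂ => zeroF1reg c w) w - zeroF1reg c w = 0 := by
  refine ⟨differentiable_zeroF1reg c, fun w ↦ ?_⟩
  rw [deriv_zeroF1reg, mul_deriv_add_mul_zeroF1reg_add_one, sub_self]
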